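/- arXiv:2203.10572 — 4 statements merged into one kernel-verified Lean document; each statement's English description precedes it below -/
import Mathlib

section
/- Let G be a discrete subgroup of U(2,1) whose limit set L(G) equals the image of a C¹ regular knot γ in ∂H²_ℂ, with C¹ lift v. Then either the image of γ is a chain, or γ is Legendrian at every t ∈ ℝ, i.e. ⟨v(t), v'(t)⟩₁ = 0 for all t. -/
/-!
Suppose the knot is not Legendrian at `t₀`. Since `⟨v,v⟩ = 0`, the number `⟨v'(t₀),v(t₀)⟩` is then
a nonzero imaginary number `iκ`, and strict differentiability gives `⟨v(s),v(t)⟩ = (s-t)(iκ + o(1))`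
as `s, t → t₀`. So the triple product `⟨x,y⟩⟨y,z⟩⟨z,x⟩` of three points of the knot close to `γ t₀`
is almost imaginary (`re_eq_zero_of_triple`): Cartan's angular invariant of the three points is
close to `±π/2`.

As `γ t₀` is a limit point there are `g ∈ G` tending to infinity with `[g v₀] → γ t₀`. For a null
vector `x`, `⟨g x, g v₀⟩ = ⟨x, v₀⟩` stays bounded while `‖g v₀‖ → ∞`, so `[g x] → γ t₀` unless
`g x` shrinks to `0`; and `g x`, `g y` cannot both shrink when `⟨g x, g y⟩ = ⟨x,y⟩ ≠ 0`. Working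
along an ultrafilter on `G` (`exists_ultrafilter`), all points of the knot but at most one are thus
attracted to `γ t₀`, staying on the knot because the limit set is invariant. The argument of the
triple product is `U(2,1)`-invariant, so for any three of these points it equals its limit and the
triple product is imaginary. The Gram determinant identity (`triple_add_conj`) then says that the
three null vectors are linearly dependent. Hence the knot lies in the polar of a single positive
vector (`exists_polar`), that is, in a chain.

Finally a knot contained in a chain is the whole chain: a chain minus a point embeds in the line,
and a circle does not (`range_eq_chainOf`).
-/

open Complex Matrix ComplexConjugate

noncomputable section

/-- ℂ³, modeled as functions `Fin 3 → ℂ`. -/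
abbrev C3 := Fin 3 → ℂ

/-- The ball-model Hermitian form of signature (2,1):
`⟨z,w⟩₁ = z₁ conj w₁ + z₂ conj w₂ − z₃ conj w₃`. -/
def herm1 (z w : C3) : ℂ :=
  z 0 * conj (w 0) + z 1 * conj (w 1) - z 2 * conj (w 2)

/-- The complex projective plane `ℙ²_ℂ`. -/
abbrev PC2 := Projectivization ℂ C3

instance : TopologicalSpace PC2 :=
  inferInstanceAs (TopologicalSpace (Quotient _))

/-- The projective point `[z]` of a vector `z` (junk value when `z = 0`). -/
def projOf (z : C3) : PC2 :=
  if h : z = 0 then Projectivization.mk ℂ (fun _ => 1)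
    (by intro h0; simpa using congrFun h0 0)
  else Projectivization.mk ℂ z h

/-- The boundary `∂H²_ℂ` of the complex hyperbolic plane:
classes of nonzero null vectors. -/
def boundaryH : Set PC2 :=
  { p | ∃ z : C3, z ≠ 0 ∧ herm1 z z = 0 ∧ p = projOf z }

/-- The group `U(2,1)` of invertible matrices preserving the Hermitian form. -/
def U21 : Set (Matrix (Fin 3) (Fin 3) ℂ) :=
  { g | IsUnit g.det ∧ ∀ z w : C3, herm1 (g.mulVec z) (g.mulVec w) = herm1 z w }

/-- The chain polar to `w`: `{[z] ∈ ∂H²_ℂ : ⟨z,w⟩₁ = 0}`. -/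
def chainOf (w : C3) : Set PC2 :=
  { p | ∃ z : C3, z ≠ 0 ∧ herm1 z z = 0 ∧ herm1 z w = 0 ∧ p = projOf z }

/-- A chain is the polar chain of some positive vector `w`. -/
def IsChainSet (C : Set PC2) : Prop :=
  ∃ w : C3, 0 < (herm1 w w).re ∧ (herm1 w w).im = 0 ∧ C = chainOf w

/-- The canonical ℝ-circle `ℙ²_ℝ ∩ ∂H²_ℂ`. -/
def canonicalRCircle : Set PC2 :=
  { p | ∃ x : Fin 3 → ℝ, (fun i => (x i : ℂ)) ≠ 0 ∧
      herm1 (fun i => (x i : ℂ)) (fun i => (x i : ℂ)) = 0 ∧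
      p = projOf (fun i => (x i : ℂ)) }

/-- The image of a set of projective points under the projective action of a matrix. -/
def mapSet (g : Matrix (Fin 3) (Fin 3) ℂ) (S : Set PC2) : Set PC2 :=
  { p | ∃ z : C3, z ≠ 0 ∧ projOf z ∈ S ∧ p = projOf (g.mulVec z) }

/-- An ℝ-circle: the image of the canonical ℝ-circle under some element of `U(2,1)`. -/
def IsRCircleSet (C : Set PC2) : Prop :=
  ∃ g ∈ U21, C = mapSet g canonicalRCircle

/-- `γ : ℝ → ℙ²_ℂ` is a `C^k` regular knot in `∂H²_ℂ` with lift `v`: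
`γ` is 1-periodic, injective on `[0,1)`, and `v` is a nowhere-vanishing `C^k`
lift consisting of null vectors with `v t`, `v' t` linearly independent. -/
structure IsRegularKnot (k : ℕ) (γ : ℝ → PC2) (v : ℝ → C3) : Prop where
  periodic : ∀ t, γ (t + 1) = γ t
  injOn : ∀ s t : ℝ, 0 ≤ s → s < 1 → 0 ≤ t → t < 1 → γ s = γ t → s = t
  smooth : ContDiff ℝ k v
  nonzero : ∀ t, v t ≠ 0
  liftEq : ∀ t, γ t = projOf (v t)
  isNull : ∀ t, herm1 (v t) (v t) = 0
  regular : ∀ t, LinearIndependent ℂ ![v t, deriv v t]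

/-- `G` is a discrete subgroup of `U(2,1)`: a subgroup of `U(2,1)` that is a
discrete subset of the space of 3×3 complex matrices. -/
structure IsDiscreteSubgroup (G : Set (Matrix (Fin 3) (Fin 3) ℂ)) : Prop where
  subset : G ⊆ U21
  one_mem : (1 : Matrix (Fin 3) (Fin 3) ℂ) ∈ G
  mul_mem : ∀ g ∈ G, ∀ h ∈ G, g * h ∈ G
  inv_mem : ∀ g ∈ G, g⁻¹ ∈ G
  discrete : ∀ g ∈ G, ∃ U : Set (Matrix (Fin 3) (Fin 3) ℂ), IsOpen U ∧ U ∩ G = {g}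

/-- The orbit of `[v₀]` under the projective action of `G`. -/
def projOrbit (G : Set (Matrix (Fin 3) (Fin 3) ℂ)) (v₀ : C3) : Set PC2 :=
  { p | ∃ g ∈ G, p = projOf (g.mulVec v₀) }

/-- The limit set of `G` relative to the base point `[v₀]`: the set of
cluster (accumulation) points of the orbit of `[v₀]` in `ℙ²_ℂ`. -/
def limitSet (G : Set (Matrix (Fin 3) (Fin 3) ℂ)) (v₀ : C3) : Set PC2 :=
  { p | AccPt p (Filter.principal (projOrbit G v₀)) }

open Filter Topology Set

/-! ### The Hermitian form and triples of null vectors -/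

lemma herm1_conj (z w : C3) : herm1 z w = conj (herm1 w z) := by
  simp [herm1]; ring

lemma herm1_smul_left (c : ℂ) (z w : C3) : herm1 (c • z) w = c * herm1 z w := by
  simp [herm1]; ring

lemma herm1_smul_right (c : ℂ) (z w : C3) : herm1 z (c • w) = conj c * herm1 z w := by
  simp [herm1]; ring

lemma herm1_sub_left (x y w : C3) : herm1 (x - y) w = herm1 x w - herm1 y w := by
  simp [herm1]; ring

lemma herm1_eq_zero_comm {z w : C3} (h : herm1 z w = 0) : herm1 w z = 0 := by
  rw [herm1_conj, h, map_zero]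

lemma continuous_herm1 : Continuous fun p : C3 × C3 => herm1 p.1 p.2 := by
  unfold herm1
  fun_prop

lemma tendsto_herm1 {α : Type*} {l : Filter α} {f g : α → C3} {a b : C3}
    (hf : Tendsto f l (𝓝 a)) (hg : Tendsto g l (𝓝 b)) :
    Tendsto (fun i => herm1 (f i) (g i)) l (𝓝 (herm1 a b)) := by
  have h : Tendsto (fun p : C3 × C3 => herm1 p.1 p.2) (𝓝 (a, b)) (𝓝 (herm1 a b)) :=
    continuous_herm1.tendsto (a, b)
  simpa only [Function.comp_def] using h.comp (hf.prodMk_nhds hg)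

lemma norm_herm1_le (z w : C3) : ‖herm1 z w‖ ≤ 3 * ‖z‖ * ‖w‖ := by
  have h (i : Fin 3) : ‖z i * conj (w i)‖ ≤ ‖z‖ * ‖w‖ := by
    rw [norm_mul, RCLike.norm_conj]
    exact mul_le_mul (norm_le_pi_norm z i) (norm_le_pi_norm w i) (norm_nonneg _) (norm_nonneg _)
  unfold herm1
  have h1 := norm_sub_le (z 0 * conj (w 0) + z 1 * conj (w 1)) (z 2 * conj (w 2))
  have h2 := norm_add_le (z 0 * conj (w 0)) (z 1 * conj (w 1))
  linarith [h 0, h 1, h 2]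

lemma projOf_of_ne {z : C3} (hz : z ≠ 0) : projOf z = Projectivization.mk ℂ z hz := by
  simp [projOf, hz]

lemma projOf_eq_iff {z w : C3} (hz : z ≠ 0) (hw : w ≠ 0) :
    projOf z = projOf w ↔ ∃ c : ℂ, c ≠ 0 ∧ z = c • w := by
  rw [projOf_of_ne hz, projOf_of_ne hw, Projectivization.mk_eq_mk_iff']
  constructor
  · rintro ⟨c, hc⟩
    refine ⟨c, ?_, hc.symm⟩
    rintro rfl
    exact hz (by simpa using hc.symm)
  · rintro ⟨c, -, hc⟩
    exact ⟨c, hc.symm⟩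

/-- A null vector with vanishing negative coordinate is zero. -/
lemma eq_zero_of_null {u : C3} (h2 : u 2 = 0) (hu : herm1 u u = 0) : u = 0 := by
  simp only [herm1, h2, Complex.mul_conj, zero_mul, sub_zero] at hu
  have hu' : normSq (u 0) + normSq (u 1) = 0 := by exact_mod_cast hu
  have h0 := normSq_nonneg (u 0)
  have h1 := normSq_nonneg (u 1)
  have e0 : u 0 = 0 := normSq_eq_zero.1 (by linarith)
  have e1 : u 1 = 0 := normSq_eq_zero.1 (by linarith)
  ext i
  fin_cases i <;> assumption

/-- Orthogonal null vectors are proportional: a form of signature `(2,1)` has no totally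
isotropic plane. -/
lemma projOf_eq_of_orthogonal {a b : C3} (ha : a ≠ 0) (hb : b ≠ 0) (haa : herm1 a a = 0)
    (hbb : herm1 b b = 0) (hab : herm1 a b = 0) : projOf a = projOf b := by
  have ha2 : a 2 ≠ 0 := fun h => ha (eq_zero_of_null h haa)
  have hb2 : b 2 ≠ 0 := fun h => hb (eq_zero_of_null h hbb)
  have hba := herm1_eq_zero_comm hab
  have key : b 2 • a - a 2 • b = 0 := by
    refine eq_zero_of_null (by simp; ring) ?_
    have : herm1 (b 2 • a - a 2 • b) (b 2 • a - a 2 • b) =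
        b 2 * conj (b 2) * herm1 a a - b 2 * conj (a 2) * herm1 a b
          - a 2 * conj (b 2) * herm1 b a + a 2 * conj (a 2) * herm1 b b := by
      simp [herm1]; ring
    rw [this, haa, hab, hba, hbb]; ring
  rw [projOf_eq_iff ha hb]
  refine ⟨a 2 / b 2, div_ne_zero ha2 hb2, ?_⟩
  rw [div_eq_inv_mul, ← smul_smul, ← sub_eq_zero.1 key, smul_smul, inv_mul_cancel₀ hb2, one_smul]

lemma herm1_eq_zero_of_projOf_eq {a b : C3} (ha : a ≠ 0) (hb : b ≠ 0) (hbb : herm1 b b = 0)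
    (h : projOf a = projOf b) : herm1 a b = 0 := by
  obtain ⟨c, -, rfl⟩ := (projOf_eq_iff ha hb).1 h
  rw [herm1_smul_left, hbb, mul_zero]

/-- The triple product `⟨x,y⟩⟨y,z⟩⟨z,x⟩`; for null vectors, the argument of its negative
is Cartan's angular invariant of the three boundary points. -/
def triple (x y z : C3) : ℂ := herm1 x y * herm1 y z * herm1 z x

/-- The determinant with rows `x`, `y`, `z`. -/
def det3 (x y z : C3) : ℂ :=
  x 0 * (y 1 * z 2 - y 2 * z 1) - x 1 * (y 0 * z 2 - y 2 * z 0) + x 2 * (y 0 * z 1 - y 1 * z 0)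

/-- Gram determinant identity: the Gram matrix of three null vectors has zero diagonal, so its
determinant is twice the real part of the triple product. -/
lemma triple_add_conj {x y z : C3} (hx : herm1 x x = 0) (hy : herm1 y y = 0)
    (hz : herm1 z z = 0) :
    triple x y z + conj (triple x y z) = -(det3 x y z * conj (det3 x y z)) := by
  have e : triple x y z + conj (triple x y z) = -(det3 x y z * conj (det3 x y z))
      - herm1 x x * herm1 y y * herm1 z z + herm1 x x * (herm1 y z * herm1 z y)
      + herm1 y y * (herm1 x z * herm1 z x) + herm1 z z * (herm1 x y * herm1 y x) := by
    simp only [triple, det3, herm1, map_add, map_sub, map_mul, Complex.conj_conj]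
    ring
  rw [e, hx, hy, hz]; ring

lemma triple_re_eq_zero_iff {x y z : C3} (hx : herm1 x x = 0) (hy : herm1 y y = 0)
    (hz : herm1 z z = 0) : (triple x y z).re = 0 ↔ det3 x y z = 0 := by
  have h := triple_add_conj hx hy hz
  rw [Complex.add_conj, Complex.mul_conj] at h
  have h' : 2 * (triple x y z).re = -normSq (det3 x y z) := by exact_mod_cast h
  rw [← normSq_eq_zero]
  constructor <;> intro h0 <;> linarith

/-- The cross product adapted to `herm1`: it represents `z ↦ det3 z x y`. -/
def hcross (x y : C3) : C3 :=
  ![conj (x 1 * y 2 - x 2 * y 1), conj (x 2 * y 0 - x 0 * y 2), -conj (x 0 * y 1 - x 1 * y 0)]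

lemma herm1_hcross (x y z : C3) : herm1 z (hcross x y) = det3 z x y := by
  simp [herm1, hcross, det3]; ring

lemma hcross_self {x y : C3} (hx : herm1 x x = 0) :
    herm1 (hcross x y) (hcross x y) = normSq (herm1 x y) := by
  have e : herm1 (hcross x y) (hcross x y)
      = herm1 x y * herm1 y x - herm1 x x * herm1 y y := by
    simp [herm1, hcross]; ring
  rw [e, hx, herm1_conj y x, Complex.mul_conj]; ring

/-- If `x`, `y`, `w` have nonzero determinant then only `0` is orthogonal to all three. -/
lemma eq_zero_of_orthogonal {x y w u : C3} (hd : det3 x y w ≠ 0) (hx : herm1 x u = 0)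
    (hy : herm1 y u = 0) (hw : herm1 w u = 0) : u = 0 := by
  have h0 : det3 x y w * conj (u 0) = herm1 x u * (y 1 * w 2 - y 2 * w 1)
      - herm1 y u * (x 1 * w 2 - x 2 * w 1) + herm1 w u * (x 1 * y 2 - x 2 * y 1) := by
    simp only [herm1, det3]; ring
  have h1 : det3 x y w * conj (u 1) = - herm1 x u * (y 0 * w 2 - y 2 * w 0)
      + herm1 y u * (x 0 * w 2 - x 2 * w 0) - herm1 w u * (x 0 * y 2 - x 2 * y 0) := by
    simp only [herm1, det3]; ring
  have h2 : det3 x y w * conj (u 2) = -(herm1 x u * (y 0 * w 1 - y 1 * w 0)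
      - herm1 y u * (x 0 * w 1 - x 1 * w 0) + herm1 w u * (x 0 * y 1 - x 1 * y 0)) := by
    simp only [herm1, det3]; ring
  rw [hx, hy, hw] at h0 h1 h2
  ext i
  fin_cases i
  · simpa [hd] using h0
  · simpa [hd] using h1
  · simpa [hd] using h2

/-- Three vectors orthogonal to a common nonzero vector are linearly dependent. -/
lemma det3_eq_zero {x y z w : C3} (hw : w ≠ 0) (hx : herm1 x w = 0) (hy : herm1 y w = 0)
    (hz : herm1 z w = 0) : det3 x y z = 0 := by
  by_contra hd
  exact hw (eq_zero_of_orthogonal hd hx hy hz)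

lemma det3_self_ne_zero {x y w : C3} (hx : herm1 x x = 0) (hxy : herm1 x y ≠ 0)
    (hww : herm1 w w ≠ 0) (hxw : herm1 x w = 0) (hyw : herm1 y w = 0)  :
    det3 x y w ≠ 0 := by
  have e : det3 x y w * conj (det3 x y w) = - (herm1 x x * herm1 y y * herm1 w w
      - herm1 x x * (herm1 y w * herm1 w y) - herm1 y y * (herm1 x w * herm1 w x)
      - herm1 w w * (herm1 x y * herm1 y x)
      + triple x y w + conj (triple x y w)) := by
    simp only [triple, det3, herm1, map_add, map_sub, map_mul, Complex.conj_conj]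
    ring
  intro h
  rw [h, triple, hx, hxw, hyw] at e
  have hyx : herm1 y x ≠ 0 := fun h => hxy (herm1_eq_zero_comm h)
  simp [hww, hxy, hyx] at e

/-! ### The projective action and its limit set -/

/-- Convergence in the quotient topology of `ℙ²_ℂ` is used through scale-invariant functions: these
descend to continuous functions on `ℙ²_ℂ`. -/
lemma tendsto_of_projOf {α : Type*} {l : Filter α} {a : α → C3} {b : C3} (ha : ∀ᶠ i in l, a i ≠ 0)
    (hb : b ≠ 0) (h : Tendsto (fun i => projOf (a i)) l (𝓝 (projOf b))) (f : C3 → ℝ)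
    (hc : ∀ z ≠ 0, ContinuousAt f z) (hs : ∀ c : ℂ, c ≠ 0 → ∀ z, f (c • z) = f z) :
    Tendsto (fun i => f (a i)) l (𝓝 (f b)) := by
  let F : PC2 → ℝ := Projectivization.lift (fun z => f z.1) (by
    rintro ⟨x, hx⟩ ⟨y, hy⟩ t (rfl : x = t • y)
    refine hs t ?_ y
    rintro rfl
    simp at hx)
  have hF : Continuous F := by
    refine Continuous.quotient_lift (continuous_iff_continuousAt.2 fun z => ?_) _
    exact (hc z.1 z.2).comp continuous_subtype_val.continuousAt
  have hFp : ∀ z ≠ 0, F (projOf z) = f z := by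
    intro z hz
    rw [projOf_of_ne hz]
    rfl
  have := (hF.tendsto _).comp h
  rw [hFp b hb] at this
  refine this.congr' ?_
  filter_upwards [ha] with i hi
  exact hFp _ hi

lemma mulVec_ne_zero {g : Matrix (Fin 3) (Fin 3) ℂ} (hg : g ∈ U21) {z : C3} (hz : z ≠ 0) :
    g *ᵥ z ≠ 0 := by
  intro h
  exact hz (Matrix.mulVec_injective_of_isUnit ((Matrix.isUnit_iff_isUnit_det g).2 hg.1)
    (by simpa using h))

/-- The limit set is invariant under the group. -/
lemma limitSet_invariant {G : Set (Matrix (Fin 3) (Fin 3) ℂ)} (hG : IsDiscreteSubgroup G)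
    {v₀ : C3} (hv₀ : v₀ ≠ 0) {g : Matrix (Fin 3) (Fin 3) ℂ} (hg : g ∈ G) {x : C3} (hx : x ≠ 0)
    (h : projOf x ∈ limitSet G v₀) : projOf (g *ᵥ x) ∈ limitSet G v₀ := by
  have hinj : Function.Injective (Matrix.toLin' g) := by
    have := Matrix.mulVec_injective_of_isUnit
      ((Matrix.isUnit_iff_isUnit_det g).2 (hG.subset hg).1)
    exact this
  let A : PC2 → PC2 := Projectivization.map (Matrix.toLin' g) hinj
  have hA : Continuous A := by
    refine Continuous.quotient_map' (f := fun z : {z : C3 // z ≠ 0} =>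
      (⟨Matrix.toLin' g z.1, fun h => z.2 (hinj (by simpa using h))⟩ : {z : C3 // z ≠ 0})) ?_ _
    refine Continuous.subtype_mk ?_ _
    exact (Matrix.toLin' g).continuous_of_finiteDimensional.comp continuous_subtype_val
  have hAp : ∀ z ≠ 0, A (projOf z) = projOf (g *ᵥ z) := by
    intro z hz
    rw [projOf_of_ne hz, projOf_of_ne (mulVec_ne_zero (hG.subset hg) hz)]
    rfl
  have hAi : Function.Injective A := Projectivization.map_injective _ hinj
  unfold limitSet at *
  rw [Set.mem_ofPred_eq, accPt_iff_nhds] at *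
  intro U hU
  rw [← hAp x hx] at hU
  obtain ⟨y, ⟨hyU, k, hk, hyk⟩, hyx⟩ := h _ (hA.continuousAt.preimage_mem_nhds hU)
  refine ⟨A y, ⟨hyU, g * k, hG.mul_mem g hg k hk, ?_⟩, ?_⟩
  · rw [hyk, hAp _ (mulVec_ne_zero (hG.subset hk) hv₀), Matrix.mulVec_mulVec]
  · rw [← hAp x hx]
    exact hAi.ne hyx

/-- Near a null limit point `[p]` the orbit yields an ultrafilter on `G` along which the
normalized orbit points `g v₀ / ‖g v₀‖` converge to a null vector orthogonal to `p`, while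
`‖g v₀‖` tends to infinity. -/
lemma exists_ultrafilter {G : Set (Matrix (Fin 3) (Fin 3) ℂ)} (hG : IsDiscreteSubgroup G)
    {v₀ : C3} (hv₀ : herm1 v₀ v₀ ≠ 0) {p : C3} (hp : p ≠ 0) (hpp : herm1 p p = 0)
    (h : projOf p ∈ limitSet G v₀) :
    ∃ U : Ultrafilter (Matrix (Fin 3) (Fin 3) ℂ), (∀ᶠ g in U, g ∈ G) ∧
      Tendsto (fun g : Matrix (Fin 3) (Fin 3) ℂ => ‖g *ᵥ v₀‖⁻¹) U (𝓝 0) ∧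
      ∃ y : C3, y ≠ 0 ∧ herm1 y y = 0 ∧ herm1 y p = 0 ∧
        Tendsto (fun g : Matrix (Fin 3) (Fin 3) ℂ => ((‖g *ᵥ v₀‖⁻¹ : ℝ) : ℂ) • (g *ᵥ v₀))
          U (𝓝 y) := by
  have hv₀' : v₀ ≠ 0 := by
    rintro rfl
    simp [herm1] at hv₀
  let φ : Matrix (Fin 3) (Fin 3) ℂ → PC2 := fun g => projOf (g *ᵥ v₀)
  let F := comap φ (𝓝 (projOf p)) ⊓ 𝓟 G
  have hF : F.NeBot := by
    have h' : AccPt (projOf p) (𝓟 (projOrbit G v₀)) := h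
    rw [accPt_iff_nhds] at h'
    rw [Filter.inf_principal_neBot_iff]
    rintro V ⟨W, hW, hWV⟩
    obtain ⟨y, ⟨hyW, g, hg, rfl⟩, -⟩ := h' W hW
    exact ⟨g, hWV hyW, hg⟩
  let U := Ultrafilter.of F
  have hUF : (U : Filter _) ≤ F := Ultrafilter.of_le F
  have hUG : ∀ᶠ g in U, g ∈ G := hUF.trans inf_le_right (mem_principal_self G)
  have hUφ : Tendsto φ U (𝓝 (projOf p)) := tendsto_iff_comap.2 (hUF.trans inf_le_left)
  have hne : ∀ᶠ g : Matrix (Fin 3) (Fin 3) ℂ in U, g *ᵥ v₀ ≠ 0 :=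
    hUG.mono fun g hg => mulVec_ne_zero (hG.subset hg) hv₀'
  have T1 := tendsto_of_projOf hne hp hUφ (fun z => ‖herm1 z z‖ / ‖z‖ ^ 2)
    (fun z hz => by
      have : Continuous fun z : C3 => herm1 z z :=
        continuous_herm1.comp (continuous_id.prodMk continuous_id)
      exact this.norm.continuousAt.div (continuous_norm.pow 2).continuousAt (by positivity))
    (fun c hc z => by
      rw [herm1_smul_left, herm1_smul_right, norm_mul, norm_mul, norm_smul, RCLike.norm_conj]
      have : ‖c‖ ≠ 0 := norm_ne_zero_iff.2 hc
      rw [← mul_assoc, ← pow_two, mul_pow, mul_div_mul_left _ _ (pow_ne_zero 2 this)])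
  have T2 := tendsto_of_projOf hne hp hUφ (fun z => ‖herm1 z p‖ / ‖z‖)
    (fun z hz => by
      have : Continuous fun z : C3 => herm1 z p :=
        continuous_herm1.comp (continuous_id.prodMk continuous_const)
      exact this.norm.continuousAt.div continuous_norm.continuousAt (by positivity))
    (fun c hc z => by
      rw [herm1_smul_left, norm_mul, norm_smul]
      rw [mul_div_mul_left _ _ (norm_ne_zero_iff.2 hc)])
  simp only [hpp, norm_zero, zero_div] at T1 T2
  have hinv : Tendsto (fun g : Matrix (Fin 3) (Fin 3) ℂ => ‖g *ᵥ v₀‖⁻¹) U (𝓝 0) := by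
    have hpos : 0 < ‖herm1 v₀ v₀‖ := norm_pos_iff.2 hv₀
    have T3 : Tendsto (fun g : Matrix (Fin 3) (Fin 3) ℂ => (‖g *ᵥ v₀‖⁻¹) ^ 2) U (𝓝 0) := by
      have := T1.div_const ‖herm1 v₀ v₀‖
      rw [zero_div] at this
      refine this.congr' ?_
      filter_upwards [hUG] with g hg
      rw [(hG.subset hg).2]
      field_simp
    have := T3.sqrt
    simpa [Real.sqrt_sq, inv_nonneg] using this
  have hsphere : ∀ᶠ g : Matrix (Fin 3) (Fin 3) ℂ in U, ((‖g *ᵥ v₀‖⁻¹ : ℝ) : ℂ) • (g *ᵥ v₀) ∈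
      Metric.sphere (0 : C3) 1 := by
    filter_upwards [hne] with g hg
    have : ‖g *ᵥ v₀‖ ≠ 0 := norm_ne_zero_iff.2 hg
    rw [mem_sphere_zero_iff_norm, norm_smul, Complex.norm_real, norm_inv, norm_norm,
      inv_mul_cancel₀ this]
  obtain ⟨y, hy, hyU⟩ := (isCompact_sphere (0 : C3) 1).ultrafilter_le_nhds'
    (U.map fun g => ((‖g *ᵥ v₀‖⁻¹ : ℝ) : ℂ) • (g *ᵥ v₀)) hsphere
  have hyT : Tendsto (fun g : Matrix (Fin 3) (Fin 3) ℂ =>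
    ((‖g *ᵥ v₀‖⁻¹ : ℝ) : ℂ) • (g *ᵥ v₀)) U (𝓝 y) := hyU
  refine ⟨U, hUG, hinv, y, ?_, ?_, ?_, hyT⟩
  · rintro rfl
    simp at hy
  · have := (tendsto_herm1 hyT hyT).norm
    refine norm_eq_zero.1 (tendsto_nhds_unique this (T1.congr fun g => ?_))
    rw [herm1_smul_left, herm1_smul_right, norm_mul, norm_mul, Complex.conj_ofReal,
      Complex.norm_real, norm_inv, norm_norm]
    field_simp
  · have := (tendsto_herm1 hyT (tendsto_const_nhds (x := p))).norm
    refine norm_eq_zero.1 (tendsto_nhds_unique this (T2.congr fun g => ?_))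
    rw [herm1_smul_left, norm_mul, Complex.norm_real, norm_inv, norm_norm]
    field_simp

/-! ### Knots and their transverse points -/

section Knot

variable {γ : ℝ → PC2} {v : ℝ → C3}

lemma knot_fract (hγ : IsRegularKnot 1 γ v) (t : ℝ) : γ (Int.fract t) = γ t := by
  have hp : Function.Periodic γ 1 := hγ.periodic
  rw [Int.fract]
  simpa using hp.sub_int_mul_eq (x := t) ⌊t⌋

lemma knot_eq (hγ : IsRegularKnot 1 γ v) {s t : ℝ} (h : γ s = γ t) (hst : |s - t| < 1) :
    s = t := by
  rw [← knot_fract hγ s, ← knot_fract hγ t] at h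
  have h' := hγ.injOn _ _ (Int.fract_nonneg s) (Int.fract_lt_one s) (Int.fract_nonneg t)
    (Int.fract_lt_one t) h
  obtain ⟨z, hz⟩ := Int.fract_eq_fract.1 h'
  rw [hz] at hst
  have : |z| < 1 := by exact_mod_cast hst
  rw [Int.abs_lt_one_iff.1 this] at hz
  push_cast at hz
  linarith

lemma knot_eq_iff (hγ : IsRegularKnot 1 γ v) (s t : ℝ) :
    γ s = γ t ↔ herm1 (v s) (v t) = 0 := by
  rw [hγ.liftEq s, hγ.liftEq t]
  exact ⟨herm1_eq_zero_of_projOf_eq (hγ.nonzero s) (hγ.nonzero t) (hγ.isNull t),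
    projOf_eq_of_orthogonal (hγ.nonzero s) (hγ.nonzero t) (hγ.isNull s) (hγ.isNull t)⟩

/-- Every value of a knot is taken within half a period of a given parameter. -/
lemma knot_exists_near (hγ : IsRegularKnot 1 γ v) (t₀ t : ℝ) :
    ∃ s ∈ Set.Icc (t₀ - 1 / 2) (t₀ + 1 / 2), γ s = γ t := by
  refine ⟨Int.fract (t - (t₀ - 1 / 2)) + (t₀ - 1 / 2), ⟨?_, ?_⟩, ?_⟩
  · linarith [Int.fract_nonneg (t - (t₀ - 1 / 2))]
  · linarith [Int.fract_lt_one (t - (t₀ - 1 / 2))]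
  · have hp : Function.Periodic γ 1 := hγ.periodic
    have := hp.sub_int_mul_eq (x := t) ⌊t - (t₀ - 1 / 2)⌋
    rw [← this]
    congr 1
    rw [Int.fract]; ring

lemma knot_hasStrictDerivAt (hγ : IsRegularKnot 1 γ v) (t : ℝ) :
    HasStrictDerivAt v (deriv v t) t :=
  hγ.smooth.contDiffAt.hasStrictDerivAt (by simp)

/-- Differentiating `⟨v,v⟩ = 0` shows that `⟨v',v⟩` is purely imaginary. -/
lemma knot_re_eq_zero (hγ : IsRegularKnot 1 γ v) (t : ℝ) :
    (herm1 (deriv v t) (v t)).re = 0 := by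
  have hd := (knot_hasStrictDerivAt hγ t).hasDerivAt
  have hi (i : Fin 3) : HasDerivAt (fun t => v t i) (deriv v t i) t := hasDerivAt_pi.1 hd i
  have hc (i : Fin 3) : HasDerivAt (fun t => conj (v t i)) (conj (deriv v t i)) t :=
    (hi i).star
  have h1 := (((hi 0).mul (hc 0)).add ((hi 1).mul (hc 1))).sub ((hi 2).mul (hc 2))
  have h0 : HasDerivAt (fun t => herm1 (v t) (v t)) 0 t := by
    rw [show (fun t => herm1 (v t) (v t)) = fun _ => 0 from funext hγ.isNull]
    exact hasDerivAt_const _ _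
  have h2 := h1.unique h0
  have h3 : herm1 (deriv v t) (v t) + conj (herm1 (deriv v t) (v t)) = 0 := by
    rw [← h2]
    simp only [herm1, map_add, map_sub, map_mul, Complex.conj_conj]
    ring
  rw [Complex.add_conj] at h3
  have : 2 * (herm1 (deriv v t) (v t)).re = 0 := by exact_mod_cast h3
  linarith

/-- Two-variable difference quotient, available because `v` is strictly differentiable. -/
lemma knot_quotient {α : Type*} {l : Filter α} (hγ : IsRegularKnot 1 γ v) {t₀ : ℝ}
    {s t : α → ℝ} (hs : Tendsto s l (𝓝 t₀)) (ht : Tendsto t l (𝓝 t₀))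
    (hst : ∀ᶠ i in l, s i ≠ t i) :
    Tendsto (fun i => herm1 (v (s i)) (v (t i)) / ((s i - t i : ℝ) : ℂ)) l
      (𝓝 (herm1 (deriv v t₀) (v t₀))) := by
  have hd := (knot_hasStrictDerivAt hγ t₀).hasStrictFDerivAt.isLittleO
  have hd' := hd.comp_tendsto (hs.prodMk_nhds ht)
  have h1 : Tendsto (fun i => (s i - t i)⁻¹ • (v (s i) - v (t i))) l (𝓝 (deriv v t₀)) := by
    have h2 := hd'.tendsto_inv_smul_nhds_zero
    have h3 := h2.add_const (deriv v t₀)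
    rw [zero_add] at h3
    refine h3.congr' ?_
    filter_upwards [hst] with i hi
    have : s i - t i ≠ 0 := sub_ne_zero.2 hi
    simp only [Function.comp_apply, smul_sub, ContinuousLinearMap.toSpanSingleton_apply, smul_smul,
      inv_mul_cancel₀ this, one_smul]
    abel
  have hv : Tendsto (fun i => v (t i)) l (𝓝 (v t₀)) :=
    (hγ.smooth.continuous.tendsto t₀).comp ht
  refine (tendsto_herm1 h1 hv).congr fun i => ?_
  rw [show (s i - t i)⁻¹ • (v (s i) - v (t i))
    = (((s i - t i)⁻¹ : ℝ) : ℂ) • (v (s i) - v (t i)) from (Complex.coe_smul _ _).symm,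
    herm1_smul_left, herm1_sub_left, hγ.isNull (t i), sub_zero, Complex.ofReal_inv,
    div_eq_inv_mul]

/-- Near a transverse point the triple product of three points of the knot has argument close to
`±π/2`; hence a constant which is a real multiple of triple products of points converging to
the transverse point is purely imaginary. -/
lemma re_eq_zero_of_triple {α : Type*} {l : Filter α} [l.NeBot] (hγ : IsRegularKnot 1 γ v)
    {t₀ : ℝ} (ht₀ : herm1 (deriv v t₀) (v t₀) ≠ 0) {a b c : α → ℝ} (ha : Tendsto a l (𝓝 t₀))
    (hb : Tendsto b l (𝓝 t₀)) (hc : Tendsto c l (𝓝 t₀)) (hab : ∀ᶠ i in l, a i ≠ b i)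
    (hbc : ∀ᶠ i in l, b i ≠ c i) (hca : ∀ᶠ i in l, c i ≠ a i) (T : ℂ)
    (hT : ∀ᶠ i in l, ∃ r : ℝ, T = r * triple (v (a i)) (v (b i)) (v (c i))) : T.re = 0 := by
  have hQ := ((knot_quotient hγ ha hb hab).mul (knot_quotient hγ hb hc hbc)).mul
    (knot_quotient hγ hc ha hca)
  set d := herm1 (deriv v t₀) (v t₀) with hd
  have hre : d.re = 0 := knot_re_eq_zero hγ t₀
  have hd3 : (d * d * d).re = 0 := by simp [hre]
  have hL := (hQ.norm).const_mul |T.re|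
  have hR := ((Complex.continuous_re.tendsto _).comp hQ).abs.const_mul ‖T‖
  rw [hd3, abs_zero, mul_zero] at hR
  have heq := tendsto_nhds_unique (hL.congr' ?_) hR
  · have : ‖d * d * d‖ ≠ 0 := by simp [ht₀]
    simpa [this, ht₀] using heq
  · filter_upwards [hT, hab, hbc, hca] with i ⟨r, hr⟩ h1 h2 h3
    have h1' : ((a i - b i : ℝ) : ℂ) ≠ 0 := by exact_mod_cast sub_ne_zero.2 h1
    have h2' : ((b i - c i : ℝ) : ℂ) ≠ 0 := by exact_mod_cast sub_ne_zero.2 h2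
    have h3' : ((c i - a i : ℝ) : ℂ) ≠ 0 := by exact_mod_cast sub_ne_zero.2 h3
    simp only [Function.comp_apply]
    set Q := herm1 (v (a i)) (v (b i)) / ((a i - b i : ℝ) : ℂ) *
      (herm1 (v (b i)) (v (c i)) / ((b i - c i : ℝ) : ℂ)) *
      (herm1 (v (c i)) (v (a i)) / ((c i - a i : ℝ) : ℂ)) with hQdef
    have hTQ : T = ((r * ((a i - b i) * (b i - c i) * (c i - a i)) : ℝ) : ℂ) * Q := by
      rw [hr, hQdef, triple]
      simp only [Complex.ofReal_mul]
      field_simp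
    clear_value Q
    rw [hTQ, Complex.re_ofReal_mul, norm_mul, Complex.norm_real, Real.norm_eq_abs, abs_mul]
    ring

end Knot

/-! ### Blowing up at a transverse point -/

/-- If the limit set is a knot with a transverse point, it lies in the polar of a positive
vector. -/
lemma exists_polar {G : Set (Matrix (Fin 3) (Fin 3) ℂ)} (hG : IsDiscreteSubgroup G)
    {v₀ : C3} (hv₀ : herm1 v₀ v₀ ≠ 0) {γ : ℝ → PC2} {v : ℝ → C3} (hγ : IsRegularKnot 1 γ v)
    (hL : limitSet G v₀ = Set.range γ) {t₀ : ℝ} (ht₀ : herm1 (deriv v t₀) (v t₀) ≠ 0) :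
    ∃ w : C3, 0 < (herm1 w w).re ∧ (herm1 w w).im = 0 ∧ ∀ t, herm1 (v t) w = 0 := by
  have hv₀' : v₀ ≠ 0 := by
    rintro rfl
    simp [herm1] at hv₀
  have hmem (t : ℝ) : projOf (v t) ∈ limitSet G v₀ := by
    rw [hL, ← hγ.liftEq]
    exact ⟨t, rfl⟩
  obtain ⟨U, hUG, hinv, y, hy, hyy, hyp, hyT⟩ :=
    exists_ultrafilter hG hv₀ (hγ.nonzero t₀) (hγ.isNull t₀) (hmem t₀)
  have hex : ∀ (g : Matrix (Fin 3) (Fin 3) ℂ) (t : ℝ), ∃ s : ℝ, ∃ c : ℂ, g ∈ G →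
      s ∈ Set.Icc (t₀ - 1 / 2) (t₀ + 1 / 2) ∧ g *ᵥ v t = c • v s := by
    intro g t
    by_cases hg : g ∈ G
    · have h1 := limitSet_invariant hG hv₀' hg (hγ.nonzero t) (hmem t)
      rw [hL] at h1
      obtain ⟨t', ht'⟩ := h1
      obtain ⟨s, hs, hst⟩ := knot_exists_near hγ t₀ t'
      rw [← hst, hγ.liftEq] at ht'
      obtain ⟨c, -, hc⟩ := (projOf_eq_iff (mulVec_ne_zero (hG.subset hg) (hγ.nonzero t))
        (hγ.nonzero s)).1 ht'.symm
      exact ⟨s, c, fun _ => ⟨hs, hc⟩⟩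
    · exact ⟨0, 0, fun h => absurd h hg⟩
  choose S C hSC using hex
  let Good : ℝ → Prop := fun t => ∃ e > 0, ∀ᶠ g : Matrix (Fin 3) (Fin 3) ℂ in U, e ≤ ‖g *ᵥ v t‖
  -- Isometries preserve `⟨v s, v t⟩`, so two distinct points cannot both be shrunk to zero.
  have hbad : ∀ s t, ¬ Good s → ¬ Good t → γ s = γ t := by
    intro s t hs ht
    rw [knot_eq_iff hγ, ← norm_eq_zero]
    by_contra hne
    have hpos : 0 < ‖herm1 (v s) (v t)‖ := lt_of_le_of_ne (norm_nonneg _) (Ne.symm hne)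
    set e := min 1 (‖herm1 (v s) (v t)‖ / 3) with he
    have hepos : 0 < e := by positivity
    have small : ∀ t, ¬ Good t →
        ∀ᶠ g : Matrix (Fin 3) (Fin 3) ℂ in U, ‖g *ᵥ v t‖ < e := by
      intro t ht
      have : ¬ ∀ᶠ g : Matrix (Fin 3) (Fin 3) ℂ in U, e ≤ ‖g *ᵥ v t‖ :=
        fun h => ht ⟨e, hepos, h⟩
      rw [← Ultrafilter.eventually_not] at this
      simpa using this
    obtain ⟨g, hg, hgs, hgt⟩ := (hUG.and ((small s hs).and (small t ht))).exists
    have h1 := norm_herm1_le (g *ᵥ v s) (g *ᵥ v t)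
    rw [(hG.subset hg).2] at h1
    have h2 : ‖g *ᵥ v s‖ * ‖g *ᵥ v t‖ < e * e :=
      mul_lt_mul'' hgs hgt (norm_nonneg _) (norm_nonneg _)
    have h3 : e * e ≤ 1 * (‖herm1 (v s) (v t)‖ / 3) :=
      mul_le_mul (min_le_left _ _) (min_le_right _ _) hepos.le zero_le_one
    nlinarith
  -- Good points are attracted to the transverse point.
  have hgood : ∀ t, Good t → Tendsto (fun g => S g t) U (𝓝 t₀) := by
    rintro t ⟨e, he, het⟩
    obtain ⟨τ, hτ, hτU⟩ := (isCompact_Icc (a := t₀ - 1 / 2) (b := t₀ + 1 / 2)).ultrafilter_le_nhds'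
      (U.map fun g => S g t) (hUG.mono fun g hg => (hSC g t hg).1)
    have hST : Tendsto (fun g => S g t) U (𝓝 τ) := hτU
    have hvS : Tendsto (fun g => v (S g t)) U (𝓝 (v τ)) :=
      (hγ.smooth.continuous.tendsto τ).comp hST
    have hlim := ((tendsto_herm1 hvS hyT).norm).mul_const e
    have hlim0 := (hvS.norm.mul_const ‖herm1 (v t) v₀‖).mul hinv
    rw [mul_zero] at hlim0
    have hle := le_of_tendsto_of_tendsto hlim hlim0 (by
      filter_upwards [hUG, het] with g hg hge
      have h1 : C g t * herm1 (v (S g t)) (g *ᵥ v₀) = herm1 (v t) v₀ := by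
        rw [← herm1_smul_left, ← (hSC g t hg).2, (hG.subset hg).2]
      rw [(hSC g t hg).2, norm_smul] at hge
      rw [herm1_smul_right, norm_mul, Complex.conj_ofReal, Complex.norm_real, norm_inv, norm_norm,
        ← h1, norm_mul]
      calc _ = ‖g *ᵥ v₀‖⁻¹ * ‖herm1 (v (S g t)) (g *ᵥ v₀)‖ * e := rfl
        _ ≤ ‖g *ᵥ v₀‖⁻¹ * ‖herm1 (v (S g t)) (g *ᵥ v₀)‖ * (‖C g t‖ * ‖v (S g t)‖) := by gcongr
        _ = _ := by ring)
    have hzero : herm1 (v τ) y = 0 := by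
      rw [← norm_eq_zero]
      refine le_antisymm ?_ (norm_nonneg _)
      by_contra! h
      exact absurd hle (not_le.2 (mul_pos h he))
    have h1 : γ τ = γ t₀ := by
      rw [hγ.liftEq, hγ.liftEq, projOf_eq_of_orthogonal (hγ.nonzero τ) hy (hγ.isNull τ) hyy hzero,
        projOf_eq_of_orthogonal hy (hγ.nonzero t₀) hyy (hγ.isNull t₀) hyp]
    have h2 : τ = t₀ := knot_eq hγ h1 (by
      rw [abs_lt]
      constructor <;> linarith [hτ.1, hτ.2])
    rwa [h2] at hST
  -- The triple product of good points is invariant under `g`, which moves them all towards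
  -- `γ t₀`; so it is imaginary and the points are dependent.
  have htriple : ∀ a b c, Good a → Good b → Good c → γ a ≠ γ b → γ b ≠ γ c → γ c ≠ γ a →
      det3 (v a) (v b) (v c) = 0 := by
    intro a b c ha hb hc hab hbc hca
    rw [← triple_re_eq_zero_iff (hγ.isNull a) (hγ.isNull b) (hγ.isNull c)]
    have hne : ∀ s t, γ s ≠ γ t → ∀ᶠ g in U, S g s ≠ S g t := by
      intro s t hst
      filter_upwards [hUG] with g hg h
      apply hst
      rw [knot_eq_iff hγ, ← (hG.subset hg).2, (hSC g s hg).2, (hSC g t hg).2, h, herm1_smul_left,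
        herm1_smul_right, hγ.isNull, mul_zero, mul_zero]
    refine re_eq_zero_of_triple hγ ht₀ (hgood a ha) (hgood b hb) (hgood c hc) (hne _ _ hab)
      (hne _ _ hbc) (hne _ _ hca) _ ?_
    filter_upwards [hUG] with g hg
    refine ⟨normSq (C g a) * normSq (C g b) * normSq (C g c), ?_⟩
    push_cast
    rw [← Complex.mul_conj, ← Complex.mul_conj, ← Complex.mul_conj]
    simp only [triple]
    rw [← (hG.subset hg).2 (v a), ← (hG.subset hg).2 (v b), ← (hG.subset hg).2 (v c),
      (hSC g a hg).2, (hSC g b hg).2, (hSC g c hg).2]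
    simp only [herm1_smul_left, herm1_smul_right]
    ring
  -- At most one point `γ τ` is bad; it is recovered at the end by continuity.
  obtain ⟨τ, hτ⟩ : ∃ τ, ∀ t, γ t ≠ γ τ → Good t := by
    by_cases h : ∃ τ, ¬ Good τ
    · obtain ⟨τ, hτ⟩ := h
      exact ⟨τ, fun t ht => by_contra fun hn => ht (hbad t τ hn hτ)⟩
    · push Not at h
      exact ⟨0, fun t _ => h t⟩
  have hnear : ∀ s t, s ≠ t → |s - t| < 1 → γ s ≠ γ t := fun s t hst h he =>
    hst (knot_eq hγ he h)
  set a := τ + 1 / 3 with ha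
  set b := τ + 2 / 3 with hb
  have hga : Good a := hτ a (hnear _ _ (by simp [ha]) (by rw [ha]; norm_num))
  have hgb : Good b := hτ b (hnear _ _ (by simp [hb]) (by rw [hb]; norm_num))
  have hab : γ a ≠ γ b := hnear _ _ (by intro h; linarith)
    (by rw [ha, hb, abs_lt]; constructor <;> linarith)
  have hherm : herm1 (v a) (v b) ≠ 0 := fun h => hab ((knot_eq_iff hγ a b).2 h)
  refine ⟨hcross (v a) (v b), ?_, ?_, ?_⟩
  · rw [hcross_self (hγ.isNull a), Complex.ofReal_re]
    exact normSq_pos.2 hherm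
  · rw [hcross_self (hγ.isNull a), Complex.ofReal_im]
  have hmost : ∀ t, γ t ≠ γ τ → herm1 (v t) (hcross (v a) (v b)) = 0 := by
    intro t ht
    rw [herm1_hcross]
    by_cases hta : γ t = γ a
    · rw [hγ.liftEq, hγ.liftEq, projOf_eq_iff (hγ.nonzero t) (hγ.nonzero a)] at hta
      obtain ⟨c, -, hc⟩ := hta
      rw [hc]; simp [det3]; ring
    by_cases htb : γ t = γ b
    · rw [hγ.liftEq, hγ.liftEq, projOf_eq_iff (hγ.nonzero t) (hγ.nonzero b)] at htb
      obtain ⟨c, -, hc⟩ := htb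
      rw [hc]; simp [det3]; ring
    exact htriple t a b (hτ t ht) hga hgb hta hab (fun h => htb h.symm)
  intro t
  by_cases ht : γ t = γ τ
  · have hcont : Continuous fun s => herm1 (v s) (hcross (v a) (v b)) :=
      continuous_herm1.comp (hγ.smooth.continuous.prodMk continuous_const)
    have h1 : Tendsto (fun s => herm1 (v s) (hcross (v a) (v b))) (𝓝[≠] t)
        (𝓝 (herm1 (v t) (hcross (v a) (v b)))) := (hcont.tendsto t).mono_left nhdsWithin_le_nhds
    refine tendsto_nhds_unique h1 (tendsto_const_nhds.congr' ?_)
    filter_upwards [self_mem_nhdsWithin,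
      mem_nhdsWithin_of_mem_nhds (Metric.ball_mem_nhds t one_pos)] with s hs hs'
    refine (hmost s ?_).symm
    rw [← ht]
    exact hnear s t hs (by simpa [Real.dist_eq] using hs')
  · exact hmost t ht

/-! ### A knot contained in a chain fills it -/

/-- A continuous real function vanishing at both ends of an interval, but nowhere inside, takes
some value twice inside. -/
lemma not_injOn_of_endpoints {H : ℝ → ℝ} (hH : Continuous H) (h0 : H 0 = 0) (h1 : H 1 = 0)
    (hne : ∀ t ∈ Set.Ioo (0 : ℝ) 1, H t ≠ 0) : ¬ Set.InjOn H (Set.Ioo 0 1) := by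
  intro hinj
  have hm : H (1 / 2) ≠ 0 := hne _ ⟨by norm_num, by norm_num⟩
  have hsurj : ∀ p q : ℝ, H p = 0 → H q = H (1 / 2) → ∃ x ∈ Set.uIcc p q, H x = H (1 / 2) / 2 := by
    intro p q hp hq
    refine intermediate_value_uIcc hH.continuousOn ?_
    rw [hp, hq, Set.mem_uIcc]
    rcases le_total 0 (H (1 / 2)) with h | h
    · left; constructor <;> linarith
    · right; constructor <;> linarith
  obtain ⟨x, hx, hxH⟩ := hsurj 0 (1 / 2) h0 rfl
  obtain ⟨z, hz, hzH⟩ := hsurj 1 (1 / 2) h1 rfl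
  rw [Set.uIcc_of_le (by norm_num)] at hx
  rw [Set.uIcc_of_ge (by norm_num)] at hz
  have ne_of : ∀ p, H p = 0 ∨ H p = H (1 / 2) → ∀ x, H x = H (1 / 2) / 2 → x ≠ p := by
    rintro p hp x hx rfl
    rcases hp with hp | hp
    · exact hm (by linarith)
    · exact hm (by linarith)
  have hx0 := ne_of 0 (.inl h0) x hxH
  have hxm := ne_of (1 / 2) (.inr rfl) x hxH
  have hz1 := ne_of 1 (.inl h1) z hzH
  have hx' : x < 1 / 2 := lt_of_le_of_ne hx.2 hxm
  have hx'' : 0 < x := lt_of_le_of_ne hx.1 (Ne.symm hx0)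
  have hz' : z < 1 := lt_of_le_of_ne hz.2 hz1
  have := hinj ⟨hx'', by linarith⟩ ⟨by linarith [hz.1], hz'⟩ (hxH.trans hzH.symm)
  linarith [hz.1]

/-- A chain, minus a point `[z]`, is parametrized by the real line through
`[u] ↦ -i⟨u,x⟩⟨x,z⟩/⟨u,z⟩` for another point `[x]`; a knot in the chain missing `[z]` would be a
circle embedded in the line. -/
lemma range_eq_chainOf {γ : ℝ → PC2} {v : ℝ → C3} (hγ : IsRegularKnot 1 γ v) {w : C3}
    (hw : herm1 w w ≠ 0) (h : ∀ t, herm1 (v t) w = 0) : Set.range γ = chainOf w := by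
  have hw0 : w ≠ 0 := by
    rintro rfl
    simp [herm1] at hw
  apply Set.Subset.antisymm
  · rintro _ ⟨t, rfl⟩
    exact ⟨v t, hγ.nonzero t, hγ.isNull t, h t, hγ.liftEq t⟩
  rintro _ ⟨z, hz, hzz, hzw, rfl⟩
  by_contra hmiss
  have hvz : ∀ t, herm1 (v t) z ≠ 0 := fun t ht => hmiss ⟨t, by
    rw [hγ.liftEq, projOf_eq_of_orthogonal (hγ.nonzero t) hz (hγ.isNull t) hzz ht]⟩
  let H : ℝ → ℝ := fun t => (triple (v t) (v 0) z).im / normSq (herm1 (v t) z)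
  have hT : ∀ t, ((triple (v t) (v 0) z).im : ℂ) * I = triple (v t) (v 0) z := by
    intro t
    have : (triple (v t) (v 0) z).re = 0 :=
      (triple_re_eq_zero_iff (hγ.isNull t) (hγ.isNull 0) hzz).2 (det3_eq_zero hw0 (h t) (h 0) hzw)
    rw [← Complex.re_add_im (triple (v t) (v 0) z), this]
    simp
  have hHI : ∀ t, (H t : ℂ) * I * herm1 (v t) z = herm1 (v t) (v 0) * herm1 (v 0) z := by
    intro t
    have h1 := hT t
    have h2 : (normSq (herm1 (v t) z) : ℂ) ≠ 0 := by
      exact_mod_cast (normSq_pos.2 (hvz t)).ne'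
    have h3 : (normSq (herm1 (v t) z) : ℂ) = herm1 (v t) z * herm1 z (v t) := by
      rw [← Complex.mul_conj, herm1_conj z (v t)]
    have h4 : herm1 z (v t) ≠ 0 := fun h => hvz t (herm1_eq_zero_comm h)
    have h5 := hvz t
    simp only [H, Complex.ofReal_div]
    rw [div_mul_eq_mul_div, h1, h3, triple]
    field_simp
  have hzero : ∀ t, H t = 0 ↔ γ t = γ 0 := by
    intro t
    have h1 := hHI t
    rw [knot_eq_iff hγ]
    constructor
    · intro h0
      rw [h0] at h1
      simpa [hvz 0] using h1.symm
    · intro h0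
      rw [h0] at h1
      simpa [hvz t] using h1
  have hcont : Continuous H := by
    have hv := hγ.smooth.continuous
    have c1 : Continuous fun t => herm1 (v t) (v 0) :=
      continuous_herm1.comp (hv.prodMk continuous_const)
    have c2 : Continuous fun t => herm1 (v t) z :=
      continuous_herm1.comp (hv.prodMk continuous_const)
    have c3 : Continuous fun t => herm1 z (v t) :=
      continuous_herm1.comp (continuous_const.prodMk hv)
    refine Continuous.div (Complex.continuous_im.comp ((c1.mul continuous_const).mul c3))
      (Complex.continuous_normSq.comp c2) fun t => (normSq_pos.2 (hvz t)).ne'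
  refine not_injOn_of_endpoints hcont ((hzero 0).2 rfl)
    ((hzero 1).2 (by simpa using hγ.periodic 0)) ?_ ?_
  · intro t ht h0
    have := knot_eq hγ ((hzero t).1 h0)
      (by rw [sub_zero, abs_lt]; constructor <;> linarith [ht.1, ht.2])
    linarith [ht.1]
  · intro s hs t ht hst
    have h1 := hHI s
    have h2 := hHI t
    rw [hst] at h1
    -- This combination of `v s` and `v t` is orthogonal to `z` by design, and to `v 0` because
    -- the two points have the same coordinate.
    have hu : herm1 (v t) z • v s - herm1 (v s) z • v t = 0 := by
      refine eq_zero_of_orthogonal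
        (det3_self_ne_zero (hγ.isNull 0) (hvz 0) hw (h 0) hzw) ?_ ?_ ?_
      · apply herm1_eq_zero_comm
        rw [herm1_sub_left, herm1_smul_left, herm1_smul_left]
        apply mul_right_cancel₀ (hvz 0)
        linear_combination herm1 (v s) z * h2 - herm1 (v t) z * h1
      · apply herm1_eq_zero_comm
        rw [herm1_sub_left, herm1_smul_left, herm1_smul_left]
        ring
      · apply herm1_eq_zero_comm
        rw [herm1_sub_left, herm1_smul_left, herm1_smul_left, h s, h t]
        ring
    have h3 : herm1 (v t) z * herm1 (v s) (v t) = 0 := by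
      have := congrArg (fun u => herm1 u (v t)) hu
      simp only [herm1_sub_left, herm1_smul_left, hγ.isNull, mul_zero, sub_zero] at this
      rw [this]
      simp [herm1]
    have h4 : γ s = γ t := by
      rw [knot_eq_iff hγ]
      exact (mul_eq_zero.1 h3).resolve_left (hvz t)
    exact hγ.injOn s t hs.1.le hs.2 ht.1.le ht.2 h4

/-- If `G` is a discrete subgroup of `U(2,1)` whose limit set
equals the image of a `C¹` regular knot `γ` with lift `v`, then either the
image of `γ` is a chain, or `γ` is Legendrian at every `t ∈ ℝ`, i.e.
`⟨v t, v' t⟩₁ = 0` for all `t`. -/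
theorem limitSet_knot_isChain_or_legendrian
    (G : Set (Matrix (Fin 3) (Fin 3) ℂ)) (hG : IsDiscreteSubgroup G)
    (v₀ : C3) (hv₀re : (herm1 v₀ v₀).re < 0) (hv₀im : (herm1 v₀ v₀).im = 0)
    (γ : ℝ → PC2) (v : ℝ → C3) (hγ : IsRegularKnot 1 γ v)
    (hL : limitSet G v₀ = Set.range γ) :
    IsChainSet (Set.range γ) ∨ ∀ t : ℝ, herm1 (v t) (deriv v t) = 0 := by
  have hv₀ : herm1 v₀ v₀ ≠ 0 := fun h => by simp [h] at hv₀re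
  by_cases hleg : ∀ t : ℝ, herm1 (v t) (deriv v t) = 0
  · exact .inr hleg
  · push Not at hleg
    obtain ⟨t₀, ht₀⟩ := hleg
    obtain ⟨w, hw, hw', h⟩ := exists_polar hG hv₀ hγ hL (t₀ := t₀)
      (fun h => ht₀ (herm1_eq_zero_comm h))
    refine .inl ⟨w, hw, hw', range_eq_chainOf hγ (fun h => ?_) h⟩
    simp [h] at hw
end
end

section
/- Let v : ℝ → ℂ³ ∖ {0} be differentiable at t with ⟨v(t), v(t)⟩₁ = 0. Then ⟨v(t), v'(t)⟩₁ = 0 if and only if ⟨v(t) ⊠ v'(t), v(t) ⊠ v'(t)⟩₁ = 0. (Equivalently: a C¹ regular knot in ∂H²_ℂ is Legendrian at t if and only if the point [v(t) ⊠ v'(t)] lies in ∂H²_ℂ, i.e. the tangent chain at t is degenerate.) -/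
open Complex Matrix ComplexConjugate

noncomputable section

/-- The Hermitian cross product on ℂ³:
`z⊠w = (conj(z₃w₂ − z₂w₃), conj(z₁w₃ − z₃w₁), conj(z₁w₂ − z₂w₁))`. -/
def box (z w : C3) : C3 :=
  ![conj (z 2 * w 1 - z 1 * w 2),
    conj (z 0 * w 2 - z 2 * w 0),
    conj (z 0 * w 1 - z 1 * w 0)]

/-- The group `SU(2,1)` of determinant-one matrices preserving `herm1`. -/
def SU21 : Set (Matrix (Fin 3) (Fin 3) ℂ) :=
  { g | g.det = 1 ∧ ∀ z w : C3, herm1 (g.mulVec z) (g.mulVec w) = herm1 z w }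

/-- The Lagrange identity for the Hermitian cross product. The sign is opposite to the one in the
positive definite case because the form has signature (2,1). -/
theorem herm1_box_box (z w : C3) :
    herm1 (box z w) (box z w) = herm1 z w * conj (herm1 z w) - herm1 z z * herm1 w w := by
  simp only [herm1, box, Matrix.cons_val, map_sub, map_add, map_mul, Complex.conj_conj]
  ring

/-- For a curve `v` of nonzero null vectors differentiable at
`t`, one has `⟨v t, v' t⟩₁ = 0` (the Legendrian condition) if and only if
`⟨v t ⊠ v' t, v t ⊠ v' t⟩₁ = 0` (degeneracy of the tangent chain). -/
theorem legendrian_iff_tangentChain_degenerate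
    (v : ℝ → C3) (t : ℝ) (hne : v t ≠ 0)
    (hv : DifferentiableAt ℝ v t)
    (hnull : herm1 (v t) (v t) = 0) :
    herm1 (v t) (deriv v t) = 0 ↔
      herm1 (box (v t) (deriv v t)) (box (v t) (deriv v t)) = 0 := by
  -- As `v t` is null, the right-hand side is the squared modulus of `⟨v t, v' t⟩₁`.
  rw [herm1_box_box, hnull, zero_mul, sub_zero, mul_eq_zero, map_eq_zero, or_self]
end
end

section
/- Let γ be a C¹ regular knot in ∂H²_ℂ with C¹ lift v, let G be a subgroup of U(2,1) such that the image Γ = γ(ℝ) is invariant under the projective action of every element of G, and suppose there exists t₀ ∈ ℝ with ⟨v(t₀), v'(t₀)⟩₁ = 0 such that the orbit {g·γ(t₀) : g ∈ G} is dense in Γ. Then ⟨v(t), v'(t)⟩₁ = 0 for all t ∈ ℝ; that is, if γ is Legendrian at one point with dense orbit in the image, then γ is Legendrian everywhere. -/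
/-! The quotient `‖⟨v s, v σ⟩₁‖ / ‖v s × v σ‖` depends only on the projective points `γ s`, `γ σ`
and its numerator is unchanged by `U(2,1)`. As `σ → s` it tends to
`‖⟨v s, v' s⟩₁‖ / ‖v s × v' s‖`, so `γ` is Legendrian at `s` exactly when the quotient vanishes in
the limit. An element `g` of the group induces a bijection of the circle `γ(ℝ)`, continuous by
compactness, and comparing the quotient for `g v` near `t` with the one for `v` near `s` shows that
`g [v t] = γ s` carries the Legendrian condition from `t` to `s`
(`herm1_eq_zero_of_local_reparam`, `legendrian_of_image`).

The Legendrian parameters form a closed set, so those in `[0, 1]` form a compact set, whose image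
under `γ` is closed in the projective plane (`isClosed_projOf_image`). That image contains the
orbit of `γ t₀`, hence all of `γ(ℝ)`, and the transfer for `g = 1` shows that every
parameter is Legendrian. -/

open Complex Matrix ComplexConjugate

noncomputable section

open Filter Topology Asymptotics Set

lemma projOf_eq_iff_cross {z w : C3} (hz : z ≠ 0) (hw : w ≠ 0) :
    projOf z = projOf w ↔ z ⨯₃ w = 0 := by
  rw [projOf, projOf, dif_neg hz, dif_neg hw]
  exact Projectivization.mk_eq_mk_iff_crossProduct_eq_zero hz hw

lemma exists_smul_of_projOf_eq {z w : C3} (hz : z ≠ 0) (hw : w ≠ 0) (h : projOf z = projOf w) :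
    ∃ c : ℂ, c ≠ 0 ∧ z = c • w := by
  rw [projOf, projOf, dif_neg hz, dif_neg hw, Projectivization.mk_eq_mk_iff'] at h
  obtain ⟨c, rfl⟩ := h
  exact ⟨c, fun hc => hz (by simp [hc]), rfl⟩

lemma herm1_smul_smul (a b : ℂ) (z w : C3) :
    herm1 (a • z) (b • w) = a * conj b * herm1 z w := by
  simp [herm1]; ring

lemma HasDerivAt.herm1_right {v : ℝ → C3} {v' : C3} {s : ℝ} (hv : HasDerivAt v v' s) (a : C3) :
    HasDerivAt (fun τ => herm1 a (v τ)) (herm1 a v') s := by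
  have h := hasDerivAt_pi.1 hv
  have hc (i : Fin 3) : HasDerivAt (fun τ => conj (v τ i)) (conj (v' i)) s := (h i).star
  exact (((hc 0).const_mul (a 0)).add ((hc 1).const_mul (a 1))).sub ((hc 2).const_mul (a 2))

lemma HasDerivAt.cross_right {v : ℝ → C3} {v' : C3} {s : ℝ} (hv : HasDerivAt v v' s) (a : C3) :
    HasDerivAt (fun τ => a ⨯₃ v τ) (a ⨯₃ v') s :=
  ((crossProduct a).toContinuousLinearMap.restrictScalars ℝ).hasFDerivAt.comp_hasDerivAt s hv

lemma tendsto_cross {α : Type*} {l : Filter α} {f g : α → C3} {a b : C3}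
    (hf : Tendsto f l (𝓝 a)) (hg : Tendsto g l (𝓝 b)) :
    Tendsto (fun x => f x ⨯₃ g x) l (𝓝 (a ⨯₃ b)) := by
  have hc : Continuous fun p : C3 × C3 => p.1 ⨯₃ p.2 := by
    simp only [cross_apply]
    refine continuous_pi fun i => ?_
    fin_cases i <;> simp <;> fun_prop
  have h : Tendsto (fun x => (f x, g x)) l (𝓝 (a, b)) := hf.prodMk_nhds hg
  have h' := (hc.tendsto (a, b)).comp h
  exact h'

lemma HasDerivAt.mulVec_right {v : ℝ → C3} {v' : C3} {s : ℝ} (hv : HasDerivAt v v' s)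
    (g : Matrix (Fin 3) (Fin 3) ℂ) :
    HasDerivAt (fun τ => g.mulVec (v τ)) (g.mulVec v') s :=
  ((Matrix.mulVecLin g).toContinuousLinearMap.restrictScalars ℝ).hasFDerivAt.comp_hasDerivAt s hv

/-- Two curves of null vectors describing the same projective curve, up to a reparametrization `σ`
which is only assumed continuous at `t`, are Legendrian at the same point. Differentiability of `σ`
is avoided by comparing `⟨v s, v σ⟩₁` with `v s × v σ` rather than with the parameter. -/
lemma herm1_eq_zero_of_local_reparam {u v : ℝ → C3} {u' v' : C3} {t s : ℝ} {σ : ℝ → ℝ} {c : ℝ → ℂ}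
    (hu : HasDerivAt u u' t) (hv : HasDerivAt v v' s) (hind : u t ⨯₃ u' ≠ 0)
    (hnu : herm1 (u t) (u t) = 0) (hnv : herm1 (v s) (v s) = 0)
    (hσ : Tendsto σ (𝓝 t) (𝓝 s)) (hst : σ t = s)
    (hc0 : ∀ τ, c τ ≠ 0) (hc : ∀ τ, u τ = c τ • v (σ τ)) (hleg : herm1 (u t) u' = 0) :
    herm1 (v s) v' = 0 := by
  have hX : (fun τ => herm1 (u t) (u τ)) =o[𝓝 t] fun τ => τ - t := by
    have := hasDerivAt_iff_isLittleO.1 (hu.herm1_right (u t))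
    simpa [hleg, hnu] using this
  have hY : (fun τ => τ - t) =O[𝓝 t] fun τ => u t ⨯₃ u τ := by
    have := ((HasDerivAtFilter.isTheta_sub (hu.cross_right (u t)) hind).isBigO_symm).comp_tendsto
      prod_pure.ge
    simpa [Function.comp_def] using this
  have hXY := hX.trans_isBigO hY
  have hut : u t = c t • v s := by rw [hc t, hst]
  have hHZ : (fun τ => herm1 (v s) (v (σ τ))) =o[𝓝 t] fun τ => v s ⨯₃ v (σ τ) := by
    refine isLittleO_iff.2 fun ε hε => ?_
    filter_upwards [isLittleO_iff.1 hXY hε] with τ hτ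
    rw [hut, hc τ, herm1_smul_smul] at hτ
    simp only [map_smul, LinearMap.smul_apply, norm_smul, norm_mul, RCLike.norm_conj] at hτ
    have h1 := norm_pos_iff.2 (hc0 t)
    have h2 := norm_pos_iff.2 (hc0 τ)
    refine le_of_mul_le_mul_left (a := ‖c t‖ * ‖c τ‖) ?_ (by positivity)
    linarith
  have hZ : (fun τ => v s ⨯₃ v (σ τ)) =O[𝓝 t] fun τ => σ τ - s := by
    have := (hv.cross_right (v s)).isBigO_sub.comp_tendsto hσ
    simpa [Function.comp_def] using this
  have hH : (fun τ => herm1 (v s) (v (σ τ)) - (σ τ - s) • herm1 (v s) v') =o[𝓝 t]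
      fun τ => σ τ - s := by
    have := (hasDerivAt_iff_isLittleO.1 (hv.herm1_right (v s))).comp_tendsto hσ
    simpa [Function.comp_def, hnv] using this
  have hlin : (fun τ => (σ τ - s) • herm1 (v s) v') =o[𝓝 t] fun τ => σ τ - s := by
    simpa using (hHZ.trans_isBigO hZ).sub hH
  by_contra hne
  have hself : (fun τ => σ τ - s) =o[𝓝 t] fun τ => σ τ - s := by
    refine IsBigO.trans_isLittleO (IsBigO.of_bound (‖herm1 (v s) v'‖⁻¹) ?_) hlin
    refine Eventually.of_forall fun τ => le_of_eq ?_
    rw [norm_smul]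
    field_simp [norm_ne_zero_iff.2 hne]
  have hev : ∀ᶠ τ in 𝓝[≠] t, σ τ - s ≠ 0 := by
    filter_upwards [(hu.cross_right (u t)).eventually_ne (c := 0) hind] with τ hτ h0
    apply hτ
    rw [hut, hc τ, sub_eq_zero.1 h0]
    simp
  exact isLittleO_irrefl' (hev.frequently.mono fun τ h => norm_ne_zero_iff.2 h)
    (hself.mono nhdsWithin_le_nhds)

lemma IsRegularKnot.fract_eq {k : ℕ} {γ : ℝ → PC2} {v : ℝ → C3} (hγ : IsRegularKnot k γ v) (s : ℝ) :
    γ (Int.fract s) = γ s := by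
  have hp : Function.Periodic γ 1 := hγ.periodic
  rw [← Int.self_sub_floor]
  rw [← mul_one (⌊s⌋ : ℝ)]
  exact hp.sub_int_mul_eq ⌊s⌋

lemma IsRegularKnot.eq_of_abs_le {k : ℕ} {γ : ℝ → PC2} {v : ℝ → C3} (hγ : IsRegularKnot k γ v)
    {s y : ℝ} (h : γ s = γ y) (hd : |y - s| ≤ 1 / 2) : y = s := by
  have hf : Int.fract y = Int.fract s :=
    hγ.injOn _ _ (Int.fract_nonneg _) (Int.fract_lt_one _) (Int.fract_nonneg _)
      (Int.fract_lt_one _) (by rw [hγ.fract_eq, hγ.fract_eq, h])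
  obtain ⟨z, hz⟩ := Int.fract_eq_fract.1 hf
  rw [hz, ← Int.cast_abs] at hd
  have : |z| < 1 := by
    have : ((|z| : ℤ) : ℝ) < 1 := by linarith
    exact_mod_cast this
  rw [Int.abs_lt_one_iff.1 this] at hz
  simpa [sub_eq_zero] using hz

lemma IsRegularKnot.exists_near {k : ℕ} {γ : ℝ → PC2} {v : ℝ → C3} (hγ : IsRegularKnot k γ v)
    (s r : ℝ) : ∃ y ∈ Icc (s - 1 / 2) (s + 1 / 2), γ y = γ r := by
  have hp : Function.Periodic γ 1 := hγ.periodic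
  refine ⟨r - round (r - s), ?_, by simpa using hp.sub_int_mul_eq (x := r) (round (r - s))⟩
  have := abs_le.1 (abs_sub_round (r - s))
  constructor <;> linarith [this.1, this.2]

/-- The projective action of an element of `U(2,1)` preserving the knot preserves the Legendrian
condition. -/
lemma legendrian_of_image {γ : ℝ → PC2} {v : ℝ → C3} (hγ : IsRegularKnot 1 γ v)
    {g : Matrix (Fin 3) (Fin 3) ℂ} (hg : g ∈ U21)
    (hinv : ∀ τ, projOf (g.mulVec (v τ)) ∈ range γ) {t s : ℝ}
    (hts : projOf (g.mulVec (v t)) = γ s) (hleg : herm1 (v t) (deriv v t) = 0) :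
    herm1 (v s) (deriv v s) = 0 := by
  have hginj : Function.Injective g.mulVec :=
    Matrix.mulVec_injective_iff_isUnit.2 ((Matrix.isUnit_iff_isUnit_det g).2 hg.1)
  have hd : Differentiable ℝ v := hγ.smooth.differentiable (by simp)
  have hne (τ : ℝ) : g.mulVec (v τ) ≠ 0 := fun h =>
    hγ.nonzero τ (hginj (by rw [h, Matrix.mulVec_zero]))
  have hex (τ : ℝ) : ∃ y ∈ Icc (s - 1 / 2) (s + 1 / 2), γ y = projOf (g.mulVec (v τ)) := by
    obtain ⟨r, hr⟩ := hinv τ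
    rw [← hr]
    exact hγ.exists_near s r
  choose σ hσI hσ using hex
  have hσ' (τ : ℝ) : projOf (g.mulVec (v τ)) = projOf (v (σ τ)) := by rw [← hσ, hγ.liftEq]
  choose c hc0 hc using fun τ => exists_smul_of_projOf_eq (hne τ) (hγ.nonzero _) (hσ' τ)
  have huniq (y : ℝ) (hy : y ∈ Icc (s - 1 / 2) (s + 1 / 2))
      (h : projOf (g.mulVec (v t)) = γ y) : y = s :=
    hγ.eq_of_abs_le (hts.symm.trans h) (abs_le.2 ⟨by linarith [hy.1], by linarith [hy.2]⟩)
  have hut : HasDerivAt (fun τ => g.mulVec (v τ)) (g.mulVec (deriv v t)) t :=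
    (hd t).hasDerivAt.mulVec_right g
  have hlim : Tendsto σ (𝓝 t) (𝓝 s) := by
    refine isCompact_Icc.tendsto_nhds_of_unique_mapClusterPt (Eventually.of_forall hσI) ?_
    intro y hy hcl
    obtain ⟨U, hU, hUy⟩ := mapClusterPt_iff_ultrafilter.1 hcl
    refine huniq y hy ?_
    rw [hγ.liftEq, projOf_eq_iff_cross (hne t) (hγ.nonzero y)]
    have h2 : Tendsto (fun τ => g.mulVec (v τ)) U (𝓝 (g.mulVec (v t))) :=
      hut.continuousAt.tendsto.mono_left hU
    have h3 : Tendsto (fun τ => v (σ τ)) U (𝓝 (v y)) := (hd y).continuousAt.tendsto.comp hUy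
    have h1 : Tendsto (fun τ => g.mulVec (v τ) ⨯₃ v (σ τ)) U (𝓝 (g.mulVec (v t) ⨯₃ v y)) :=
      tendsto_cross h2 h3
    refine tendsto_nhds_unique h1 (tendsto_const_nhds.congr fun τ => ?_)
    exact ((projOf_eq_iff_cross (hne τ) (hγ.nonzero _)).1 (hσ' τ)).symm
  refine herm1_eq_zero_of_local_reparam hut (hd s).hasDerivAt ?_ ?_ (hγ.isNull s) hlim
    (huniq _ (hσI t) (hσ t).symm) hc0 hc ?_
  · rw [crossProduct_ne_zero_iff_linearIndependent, LinearIndependent.pair_iff]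
    intro a b hab
    refine LinearIndependent.pair_iff.1 (hγ.regular t) a b (hginj ?_)
    simpa [Matrix.mulVec_add, Matrix.mulVec_smul] using hab
  · rw [hg.2, hγ.isNull]
  · rw [hg.2, hleg]

/-- The projective image of a compact piece of a curve is closed. -/
lemma isClosed_projOf_image {v : ℝ → C3} (hv : Continuous v) (hv0 : ∀ t, v t ≠ 0) {K : Set ℝ}
    (hK : IsCompact K) : IsClosed ((fun t => projOf (v t)) '' K) := by
  refine isClosed_coinduced.2 ?_
  have : CompactSpace K := isCompact_iff_compactSpace.1 hK
  have hcl : IsClosed {p : K × {z : C3 // z ≠ 0} | v p.1 ⨯₃ p.2.1 = 0} := by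
    refine isClosed_eq (continuous_iff_continuousAt.2 fun p => tendsto_cross ?_ ?_) continuous_const
    · exact (hv.comp (continuous_subtype_val.comp continuous_fst)).continuousAt
    · exact (continuous_subtype_val.comp continuous_snd).continuousAt
  convert isClosedMap_snd_of_compactSpace _ hcl using 1
  ext ⟨z, hz⟩
  have hmk : (Quotient.mk _ ⟨z, hz⟩ : PC2) = projOf z := by
    rw [projOf, dif_neg hz]; rfl
  constructor
  · rintro ⟨s, hs, h⟩
    exact ⟨(⟨s, hs⟩, ⟨z, hz⟩), (projOf_eq_iff_cross (hv0 s) hz).1 (h.trans hmk), rfl⟩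
  · rintro ⟨⟨⟨s, hs⟩, w⟩, h, rfl⟩
    exact ⟨s, hs, ((projOf_eq_iff_cross (hv0 s) hz).2 h).trans hmk.symm⟩

/-- Let `γ` be a `C¹` regular knot with lift `v`, let `G` be
a subgroup of `U(2,1)` leaving the image `Γ = γ(ℝ)` invariant, and suppose `γ`
is Legendrian at some `t₀` whose `G`-orbit is dense in `Γ`. Then `γ` is
Legendrian everywhere: `⟨v t, v' t⟩₁ = 0` for all `t`. -/
theorem legendrian_at_dense_point_implies_legendrian
    (γ : ℝ → PC2) (v : ℝ → C3) (hγ : IsRegularKnot 1 γ v)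
    (G : Set (Matrix (Fin 3) (Fin 3) ℂ))
    (hGsub : G ⊆ U21)
    (hone : (1 : Matrix (Fin 3) (Fin 3) ℂ) ∈ G)
    (hmul : ∀ g ∈ G, ∀ h ∈ G, g * h ∈ G)
    (hinv : ∀ g ∈ G, g⁻¹ ∈ G)
    (hΓinv : ∀ g ∈ G, mapSet g (Set.range γ) = Set.range γ)
    (t₀ : ℝ) (hleg : herm1 (v t₀) (deriv v t₀) = 0)
    (hdense : Set.range γ ⊆ closure (projOrbit G (v t₀))) :
    ∀ t : ℝ, herm1 (v t) (deriv v t) = 0 := by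
  have hact (g) (hg : g ∈ G) (τ : ℝ) : projOf (g.mulVec (v τ)) ∈ range γ := by
    rw [← hΓinv g hg]
    exact ⟨v τ, hγ.nonzero τ, ⟨τ, hγ.liftEq τ⟩, rfl⟩
  have hcv : Continuous v := hγ.smooth.continuous
  have hcd : Continuous (deriv v) := hγ.smooth.continuous_deriv (by simp)
  have hL : IsClosed {t : ℝ | herm1 (v t) (deriv v t) = 0} := by
    refine isClosed_eq ?_ continuous_const
    simp only [herm1]
    fun_prop
  have hcl := isClosed_projOf_image hcv hγ.nonzero ((isCompact_Icc (a := (0 : ℝ)) (b := 1)).inter_right hL)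
  have hsub : projOrbit G (v t₀) ⊆
      (fun t => projOf (v t)) '' (Icc 0 1 ∩ {t : ℝ | herm1 (v t) (deriv v t) = 0}) := by
    rintro p ⟨g, hg, rfl⟩
    obtain ⟨r, hr⟩ := hact g hg t₀
    rw [← hγ.fract_eq] at hr
    exact ⟨Int.fract r, ⟨⟨Int.fract_nonneg r, (Int.fract_lt_one r).le⟩,
      legendrian_of_image hγ (hGsub hg) (hact g hg) hr.symm hleg⟩, by rw [← hr, hγ.liftEq]⟩
  intro t
  obtain ⟨s, ⟨-, hs⟩, hst⟩ := closure_minimal hsub hcl (hdense ⟨t, rfl⟩)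
  exact legendrian_of_image hγ (hGsub hone) (hact 1 hone) (by rw [Matrix.one_mulVec]; exact hst) hs
end
end

section
/- Let ζ : ℝ → ℂ and v : ℝ → ℝ be differentiable at t, and define the Siegel-model lift V(t) = (−|ζ(t)|² + i·v(t), √2·ζ(t), 1) ∈ ℂ³. Then ⟨V(t), V'(t)⟩₂ = 0 if and only if v'(t) = 2·Im(ζ(t)·conj(ζ'(t))). In other words, the lift of a curve in Heisenberg coordinates is orthogonal to its derivative with respect to the Siegel Hermitian form exactly when the curve satisfies the contact (Legendrian) condition. -/
/-!
With `V' = (-(ζ' conj ζ + ζ conj ζ') + i v', √2 ζ', 0)` (`hasDerivAt_siegelLift`), sesquilinearity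
gives `⟨V, V'⟩₂ = 2 ζ conj ζ' - 2 Re (ζ conj ζ') - i v' = i (2 Im (ζ conj ζ') - v')`
(`herm2_lift_deriv`), which vanishes exactly under the contact condition.
-/

open Complex Matrix ComplexConjugate

noncomputable section

/-- The Siegel-model Hermitian form `⟨z,w⟩₂ = z₁ conj w₃ + z₂ conj w₂ + z₃ conj w₁`. -/
def herm2 (z w : C3) : ℂ :=
  z 0 * conj (w 2) + z 1 * conj (w 1) + z 2 * conj (w 0)

/-- The velocity of the lift. Writing `|ζ|² = ζ · conj ζ` avoids splitting `ζ` into real and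
imaginary parts. -/
theorem hasDerivAt_siegelLift {ζ : ℝ → ℂ} {v : ℝ → ℝ} {t : ℝ} {ζ' : ℂ} {v' : ℝ}
    (dζ : HasDerivAt ζ ζ' t) (dv : HasDerivAt (fun s => (v s : ℂ)) (v' : ℂ) t) :
    HasDerivAt (fun s => (![(-(Complex.normSq (ζ s)) : ℂ) + Complex.I * (v s : ℂ),
      (Real.sqrt 2 : ℂ) * ζ s, 1] : C3))
      ![-(ζ' * conj (ζ t) + ζ t * conj ζ') + Complex.I * (v' : ℂ),
        (Real.sqrt 2 : ℂ) * ζ', 0] t := by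
  rw [hasDerivAt_pi]
  intro i
  fin_cases i
  · have h : HasDerivAt (fun s => -(ζ s * conj (ζ s)) + Complex.I * (v s : ℂ))
        (-(ζ' * conj (ζ t) + ζ t * conj ζ') + Complex.I * (v' : ℂ)) t :=
      (dζ.mul dζ.star).neg.add (dv.const_mul Complex.I)
    simp only [mul_conj] at h
    exact h
  · exact dζ.const_mul (Real.sqrt 2 : ℂ)
  · exact hasDerivAt_const t (1 : ℂ)

/-- The real parts cancel, because the lift stays in the null cone; what remains is `i` times the
contact form evaluated on the velocity `(b, y)` at the point `(a, x)`. -/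
theorem herm2_lift_deriv (a b : ℂ) (x y : ℝ) :
    herm2 ![(-(Complex.normSq a) : ℂ) + Complex.I * (x : ℂ), (Real.sqrt 2 : ℂ) * a, 1]
      ![-(b * conj a + a * conj b) + Complex.I * (y : ℂ), (Real.sqrt 2 : ℂ) * b, 0] =
      Complex.I * ((2 * (a * conj b).im - y : ℝ) : ℂ) := by
  have h2 : Real.sqrt 2 * Real.sqrt 2 = 2 := Real.mul_self_sqrt (by norm_num)
  apply Complex.ext
  · simp [herm2]
    linear_combination (a.re * b.re + a.im * b.im) * h2
  · simp [herm2]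
    linear_combination (a.im * b.re - a.re * b.im) * h2

/-- For a curve `(ζ, v)` in Heisenberg coordinates with
Siegel-model lift `V(t) = (−|ζ(t)|² + i·v(t), √2·ζ(t), 1)`, one has
`⟨V(t), V'(t)⟩₂ = 0` if and only if `v'(t) = 2·Im(ζ(t)·conj(ζ'(t)))`, i.e.
exactly when the curve satisfies the contact (Legendrian) condition. -/
theorem siegel_lift_orthogonal_iff_contact
    (ζ : ℝ → ℂ) (v : ℝ → ℝ) (t : ℝ)
    (hζ : DifferentiableAt ℝ ζ t) (hv : DifferentiableAt ℝ v t)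
    (V : ℝ → C3)
    (hV : ∀ s, V s = ![(-(Complex.normSq (ζ s)) : ℂ) + Complex.I * (v s : ℂ),
      (Real.sqrt 2 : ℂ) * ζ s, 1]) :
    herm2 (V t) (deriv V t) = 0 ↔
      deriv v t = 2 * (ζ t * conj (deriv ζ t)).im := by
  have dζ := hζ.hasDerivAt
  have dv := hv.hasDerivAt.ofReal_comp
  have dV := hasDerivAt_siegelLift dζ dv
  rw [← funext hV] at dV
  rw [dV.deriv, hV t, herm2_lift_deriv]
  simp only [mul_eq_zero, I_ne_zero, false_or, ofReal_eq_zero, sub_eq_zero]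
  exact eq_comm
end
end
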